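/- arXiv:0712.3531 — 2 statements merged into one kernel-verified Lean document; each statement's English description precedes it below -/
import Mathlib

section
/- Let ε, a, b ∈ ℝ, set c := a + b, and suppose γ, A : ℝ → ℝ are differentiable with A(τ) > 0 for all τ, satisfying the reduced planar system γ'(τ) = 2·(ε − c·A(τ))·γ(τ) and A'(τ) = 2·((ε − a·A(τ))·A(τ) − b·γ(τ)²). Then the ratio s(τ) := γ(τ)/A(τ) is differentiable and satisfies s'(τ) = −2·b·A(τ)·s(τ)·(1 − s(τ)²) for all τ. -/
/-- For solutions of the reduced planar system
`γ' = 2(ε - cA)γ`, `A' = 2((ε - aA)A - bγ²)` with `c = a + b` and `A > 0`, the ratio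
`s = γ/A` satisfies `s' = -2bA s (1 - s²)`. -/
theorem stmt_16 (ε a b : ℝ) (γ A : ℝ → ℝ)
    (hpos : ∀ τ : ℝ, 0 < A τ)
    (hγ : ∀ τ : ℝ, HasDerivAt γ (2 * (ε - (a + b) * A τ) * γ τ) τ)
    (hA : ∀ τ : ℝ, HasDerivAt A (2 * ((ε - a * A τ) * A τ - b * γ τ ^ 2)) τ) :
    ∀ τ : ℝ, HasDerivAt (fun s => γ s / A s)
      (-2 * b * A τ * (γ τ / A τ) * (1 - (γ τ / A τ) ^ 2)) τ := by
  intro τ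
  have h0 : A τ ≠ 0 := (hpos τ).ne'
  refine ((hγ τ).fun_div (hA τ) h0).congr_deriv ?_
  field_simp
  ring
end

section
/- Let ε > 0, a > 0, b > 0 and set c := a + b. The vector field F(γ, A) := ( 2(ε − cA)γ , 2((ε − aA)A − bγ²) ) on ℝ² is differentiable at each of the two equilibria (±ε/c, ε/c), and the Jacobian matrix of F there (in coordinates (γ, A)) is [[0, ∓2ε], [∓4bε/c, 2ε(b − a)/c]], whose determinant equals −8bε²/c < 0; consequently the linearization at each of these points has two real eigenvalues μ₋ < 0 < μ₊, i.e. the equilibria (±ε/c, ε/c) (corresponding to the unstable, non-PT-symmetric periodic solutions) are saddle points. -/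
/-- For `ε, a, b > 0` and `c = a + b`, the reduced planar vector field
`F(γ, A) = (2(ε - cA)γ, 2((ε - aA)A - bγ²))` is differentiable at each equilibrium
`(±ε/c, ε/c)` (sign `s = ±1`), with Jacobian matrix `[[0, ∓2ε], [∓4bε/c, 2ε(b-a)/c]]`
whose determinant is `-8bε²/c < 0`; hence the linearization has two real eigenvalues
`μ₋ < 0 < μ₊` (roots of the characteristic polynomial), i.e. these equilibria are
saddle points. -/
theorem stmt_19 (ε a b : ℝ) (hε : 0 < ε) (ha : 0 < a) (hb : 0 < b) :
    ∀ s : ℝ, s = 1 ∨ s = -1 →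
      ∃ L : ℝ × ℝ →L[ℝ] ℝ × ℝ,
        HasFDerivAt (fun p : ℝ × ℝ =>
            ((2 * (ε - (a + b) * p.2) * p.1,
              2 * ((ε - a * p.2) * p.2 - b * p.1 ^ 2)) : ℝ × ℝ))
          L (s * ε / (a + b), ε / (a + b)) ∧
        (∀ v : ℝ × ℝ,
          L v = ((0 : ℝ) * v.1 + (-(s * 2 * ε)) * v.2,
            (-(s * 4 * b * ε / (a + b))) * v.1 + (2 * ε * (b - a) / (a + b)) * v.2)) ∧
        (0 : ℝ) * (2 * ε * (b - a) / (a + b)) -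
            (-(s * 2 * ε)) * (-(s * 4 * b * ε / (a + b))) = -(8 * b * ε ^ 2 / (a + b)) ∧
        -(8 * b * ε ^ 2 / (a + b)) < 0 ∧
        ∃ μm μp : ℝ, μm < 0 ∧ 0 < μp ∧
          μm ^ 2 - (2 * ε * (b - a) / (a + b)) * μm + (-(8 * b * ε ^ 2 / (a + b))) = 0 ∧
          μp ^ 2 - (2 * ε * (b - a) / (a + b)) * μp + (-(8 * b * ε ^ 2 / (a + b))) = 0 := by
  have hc : 0 < a + b := by positivity
  have hc' : a + b ≠ 0 := hc.ne'
  intro s hs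
  have hs2 : s ^ 2 = 1 := by rcases hs with rfl | rfl <;> norm_num
  have hD : 0 < 8 * b * ε ^ 2 / (a + b) := by positivity
  have h1 : HasFDerivAt (fun p : ℝ × ℝ => p.1) (ContinuousLinearMap.fst ℝ ℝ ℝ)
      (s * ε / (a + b), ε / (a + b)) := hasFDerivAt_fst
  have h2 : HasFDerivAt (fun p : ℝ × ℝ => p.2) (ContinuousLinearMap.snd ℝ ℝ ℝ)
      (s * ε / (a + b), ε / (a + b)) := hasFDerivAt_snd
  have hF := ((((h2.const_mul (a + b)).const_sub ε).const_mul 2).mul h1).prodMk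
    (((((h2.const_mul a).const_sub ε).mul h2).sub ((h1.pow 2).const_mul b)).const_mul 2)
  refine ⟨_, hF, ?_, ?_, by linarith, ?_⟩
  · intro v
    ext
    · simp
      field_simp
      ring
    · simp
      field_simp
      ring
  · field_simp
    linear_combination (-8 * b * ε) * hs2
  · generalize 8 * b * ε ^ 2 / (a + b) = D at hD
    generalize 2 * ε * (b - a) / (a + b) = T
    have hr : 0 ≤ T ^ 2 + 4 * D := by positivity
    have hsq := Real.sq_sqrt hr
    have hlt : |T| < √(T ^ 2 + 4 * D) := by
      apply Real.lt_sqrt_of_sq_lt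
      rw [sq_abs]
      linarith
    have := abs_lt.mp hlt
    refine ⟨(T - √(T ^ 2 + 4 * D)) / 2, (T + √(T ^ 2 + 4 * D)) / 2, by linarith, by linarith, ?_, ?_⟩
    · linear_combination hsq / 4
    · linear_combination hsq / 4
end
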